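/- arXiv:2212.03987 — 3 statements merged into one kernel-verified Lean document; each statement's English description precedes it below -/
import Mathlib

section
/- Let p be an odd prime and m, n positive integers with d = gcd(m, n) such that n/d is odd. Set q = p^{2mn/d}, α = (q−1)/(p^n−1), β = (q−1)/(p^m+1). Then the number of pairs (i, j) of natural numbers with 0 ≤ iα ≤ jβ ≤ q−1 and C(jβ, iα) ≢ 0 (mod p) equals 2^{−n}·((p+1)^{n/d} + Σ_{i=1}^{(p−1)/2} ((2i+1)^{m/d} − (2i−1)^{m/d})(p−2i+1)^{n/d})^d + p^n + 1. -/
lemma lucas_iff {p : ℕ} (hp : p.Prime) (L x y : ℕ) (hx : x < p ^ L) (hy : y < p ^ L) :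
    ¬ p ∣ Nat.choose x y ↔ ∀ k < L, y / p ^ k % p ≤ x / p ^ k % p := by
  have := Fact.mk hp
  have h := Choose.choose_modEq_prod_range_choose_nat (p := p) hx hy
  rw [(h.dvd_iff (dvd_refl p)), hp.prime.dvd_finsetProd_iff]
  push Not
  refine forall_congr' fun k => ?_
  rw [Finset.mem_range]
  refine imp_congr_right fun hk => ?_
  constructor
  · intro h1
    by_contra! h2
    exact h1 (by rw [Nat.choose_eq_zero_of_lt h2]; exact dvd_zero _)
  · intro h1 h2
    have h3 : x / p ^ k % p < p := Nat.mod_lt _ hp.pos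
    have h4 := Nat.choose_mul_factorial_mul_factorial h1
    have : p ∣ (x / p ^ k % p).factorial := by
      rw [← h4, mul_assoc]; exact dvd_mul_of_dvd_left h2 _
    rw [hp.dvd_factorial] at this
    omega

lemma rep_digit (P x e t : ℕ) (hx : x < P) (ht : t < e) :
    x * (∑ i ∈ Finset.range e, P ^ i) / P ^ t % P = x := by
  induction t generalizing e with
  | zero =>
    obtain ⟨e, rfl⟩ : ∃ e', e = e' + 1 := ⟨e - 1, by omega⟩
    rw [Finset.sum_range_succ']
    simp only [pow_succ, ← Finset.sum_mul]
    simp only [pow_zero, Nat.div_one, mul_add, mul_one]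
    rw [← mul_assoc, Nat.mul_add_mod', Nat.mod_eq_of_lt hx]
  | succ t ih =>
    obtain ⟨e, rfl⟩ : ∃ e', e = e' + 1 := ⟨e - 1, by omega⟩
    rw [pow_succ', ← Nat.div_div_eq_div_mul, Finset.sum_range_succ']
    have : x * (∑ k ∈ Finset.range e, P ^ (k + 1) + P ^ 0) / P
        = x * (∑ k ∈ Finset.range e, P ^ k) := by
      simp only [pow_succ, ← Finset.sum_mul]
      rw [pow_zero, mul_add, mul_one, ← mul_assoc, Nat.add_div_of_dvd_right (Dvd.intro_left _ rfl),
        Nat.mul_div_cancel _ (by omega), Nat.div_eq_of_lt hx, add_zero]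
    rw [this]
    exact ih e (by omega)

lemma rep_digit' (p w x e k : ℕ) (hw : 0 < w) (hx : x < p ^ w) (hk : k < w * e) :
    x * (∑ i ∈ Finset.range e, (p ^ w) ^ i) / p ^ k % p = x / p ^ (k % w) % p := by
  have hr : k % w < w := Nat.mod_lt _ hw
  conv_lhs => rw [← Nat.div_add_mod k w, pow_add, ← Nat.div_div_eq_div_mul, pow_mul]
  have h := rep_digit (p ^ w) x e (k / w) hx (Nat.div_lt_of_lt_mul hk)
  set y := x * (∑ i ∈ Finset.range e, (p ^ w) ^ i) / (p ^ w) ^ (k / w) with hy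
  conv_rhs => rw [← h]
  obtain ⟨c, hc⟩ : ∃ c, w = k % w + (1 + c) := ⟨w - k % w - 1, by omega⟩
  set r := k % w
  have : p ^ w = p ^ r * (p * p ^ c) := by rw [hc, pow_add, pow_add, pow_one]
  rw [this, Nat.mod_mul_right_div_self, Nat.mod_mul_right_mod]

lemma compl_digit (p m b r : ℕ) (hp : 0 < p) (hb : b < p ^ m) (hr : r < m) :
    (p ^ m - (b + 1)) / p ^ r % p = p - 1 - b / p ^ r % p := by
  obtain ⟨c, hc⟩ : ∃ c, m = r + (1 + c) := ⟨m - r - 1, by omega⟩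
  have h1 : p ^ m = p ^ r * (p * p ^ c) := by rw [hc, pow_add, pow_add, pow_one]
  rw [h1] at hb ⊢
  rw [Nat.mul_sub_div _ _ _ hb]
  have hy : b / p ^ r < p * p ^ c := Nat.div_lt_of_lt_mul hb
  set y := b / p ^ r
  have hv : y % p < p := Nat.mod_lt _ hp
  have hu : y / p < p ^ c := Nat.div_lt_of_lt_mul hy
  obtain ⟨f, hf⟩ : ∃ f, p ^ c = y / p + 1 + f := ⟨p ^ c - y / p - 1, by omega⟩
  have : p * p ^ c - (y + 1) = p * f + (p - 1 - y % p) := by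
    have h2 := Nat.div_add_mod y p
    rw [hf]
    have : p * (y / p + 1 + f) = p * (y / p) + p + p * f := by ring
    omega
  rw [this, Nat.mul_add_mod, Nat.mod_eq_of_lt (by omega)]

lemma crt_all (n m d : ℕ) (hn : 0 < n) (hm : 0 < m) (hd : d = Nat.gcd m n) (ho : Odd (n / d))
    (A : ℕ → ℕ → Prop) :
    (∀ k < 2 * m * n / d, A (k % n) (k % (2 * m))) ↔
      ∀ r < n, ∀ s < m, r % d = s % d → A r s ∧ A r (m + s) := by
  have hd0 : 0 < d := hd ▸ Nat.gcd_pos_of_pos_left _ hm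
  have hdn : d ∣ n := hd ▸ Nat.gcd_dvd_right _ _
  have hdm : d ∣ m := hd ▸ Nat.gcd_dvd_left _ _
  have hg : Nat.gcd n (2 * m) = d := by
    obtain ⟨N, rfl⟩ := hdn
    obtain ⟨M, rfl⟩ := hdm
    rw [Nat.mul_div_cancel_left _ hd0] at ho
    rw [Nat.gcd_mul_left] at hd
    have hc : Nat.gcd M N = 1 := by
      have : d * 1 = d * Nat.gcd M N := by omega
      exact (Nat.eq_of_mul_eq_mul_left hd0 this).symm
    rw [show 2 * (d * M) = d * (2 * M) by ring, Nat.gcd_mul_left]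
    have : Nat.Coprime N (2 * M) :=
      Nat.Coprime.mul_right (Nat.coprime_two_right.2 ho) (Nat.Coprime.symm hc)
    rw [this.gcd_eq_one, mul_one]
  have hl : Nat.lcm n (2 * m) = 2 * m * n / d := by
    rw [Nat.lcm, hg, mul_comm n]
  have key : ∀ r < n, ∀ s < 2 * m, r % d = s % d →
      ∃ k < 2 * m * n / d, k % n = r ∧ k % (2 * m) = s := by
    intro r hr s hs h
    have h' : r ≡ s [MOD Nat.gcd n (2 * m)] := by rw [hg]; exact h
    refine ⟨Nat.chineseRemainder' h', ?_, ?_, ?_⟩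
    · rw [← hl]; exact Nat.chineseRemainder'_lt_lcm h' (by omega) (by omega)
    · have := (Nat.chineseRemainder' h').2.1
      rw [Nat.ModEq, Nat.mod_eq_of_lt hr] at this
      exact this
    · have := (Nat.chineseRemainder' h').2.2
      rw [Nat.ModEq, Nat.mod_eq_of_lt hs] at this
      exact this
  constructor
  · intro h r hr s hs hrs
    constructor
    · obtain ⟨k, hk, h1, h2⟩ := key r hr s (by omega) hrs
      have := h k hk
      rwa [h1, h2] at this
    · obtain ⟨k, hk, h1, h2⟩ := key r hr (m + s) (by omega) (by
        rw [hrs, Nat.add_mod, Nat.mod_eq_zero_of_dvd hdm, zero_add, Nat.mod_mod])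
      have := h k hk
      rwa [h1, h2] at this
  · intro h k hk
    have h1 : k % n < n := Nat.mod_lt _ hn
    have h2 : k % (2 * m) < 2 * m := Nat.mod_lt _ (by omega)
    have h3 : k % n % d = k % (2 * m) % d := by
      rw [Nat.mod_mod_of_dvd _ hdn, Nat.mod_mod_of_dvd _ (Dvd.dvd.mul_left hdm 2)]
    by_cases hs : k % (2 * m) < m
    · exact (h _ h1 _ hs h3).1
    · obtain ⟨s, hs'⟩ : ∃ s, k % (2 * m) = m + s := ⟨k % (2 * m) - m, by omega⟩
      rw [hs'] at h3 h2 ⊢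
      refine (h _ h1 s (by omega) ?_).2
      rw [h3, Nat.add_mod, Nat.mod_eq_zero_of_dvd hdm, zero_add, Nat.mod_mod]

lemma geom_bd (P e : ℕ) (hP : 2 ≤ P) :
    (P - 1) * (∑ i ∈ Finset.range e, P ^ i) = P ^ e - 1 := by
  rw [Nat.geomSum_eq hP e]
  exact Nat.mul_div_cancel' (by simpa using Nat.sub_one_dvd_pow_sub_one P e)

lemma alpha_eq {p m n d q : ℕ} (hp : p.Prime) (hn : 0 < n)
    (hdm : d ∣ m) (hd0 : 0 < d) (hq : q = p ^ (2 * m * n / d)) :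
    2 * m * n / d = n * (2 * (m / d)) ∧
    (p ^ n - 1) * (∑ i ∈ Finset.range (2 * (m / d)), (p ^ n) ^ i) = q - 1 ∧
    (q - 1) / (p ^ n - 1) = ∑ i ∈ Finset.range (2 * (m / d)), (p ^ n) ^ i := by
  obtain ⟨M, rfl⟩ := hdm
  have h0 : 2 * (d * M) * n / d = n * (2 * M) := by
    rw [show 2 * (d * M) * n = d * (n * (2 * M)) by ring, Nat.mul_div_cancel_left _ hd0]
  have h2 : 2 ≤ p ^ n := le_trans hp.two_le (Nat.le_self_pow (by omega) p)
  rw [Nat.mul_div_cancel_left _ hd0]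
  have h3 := geom_bd (p ^ n) (2 * M) h2
  rw [← pow_mul, ← h0, ← hq] at h3
  refine ⟨h0, h3, ?_⟩
  rw [← h3, Nat.mul_div_cancel_left _ (by omega)]

lemma beta_eq {p m n d q : ℕ} (hp : p.Prime) (hm : 0 < m)
    (hdn : d ∣ n) (hd0 : 0 < d) (hq : q = p ^ (2 * m * n / d)) :
    2 * m * n / d = 2 * m * (n / d) ∧
    (p ^ m + 1) * ((p ^ m - 1) * ∑ i ∈ Finset.range (n / d), (p ^ (2 * m)) ^ i) = q - 1 ∧
    (q - 1) / (p ^ m + 1) = (p ^ m - 1) * ∑ i ∈ Finset.range (n / d), (p ^ (2 * m)) ^ i := by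
  obtain ⟨N, rfl⟩ := hdn
  have h0 : 2 * m * (d * N) / d = 2 * m * N := by
    rw [show 2 * m * (d * N) = d * (2 * m * N) by ring, Nat.mul_div_cancel_left _ hd0]
  have h2 : 2 ≤ p ^ (2 * m) := le_trans hp.two_le (Nat.le_self_pow (by omega) p)
  rw [Nat.mul_div_cancel_left _ hd0]
  have h3 := geom_bd (p ^ (2 * m)) N h2
  rw [← pow_mul, ← h0, ← hq] at h3
  have h4 : p ^ (2 * m) - 1 = (p ^ m + 1) * (p ^ m - 1) := by
    rw [two_mul, pow_add]
    have := Nat.sq_sub_sq (p ^ m) 1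
    rw [← this]; ring_nf
  rw [h4, mul_assoc] at h3
  refine ⟨h0, h3, ?_⟩
  rw [← h3, Nat.mul_div_cancel_left _ (by omega)]

/-- digit comparison for the two numbers -/
lemma core_iff {p m n d : ℕ} (hp : p.Prime) (hm : 0 < m) (hn : 0 < n)
    (hd : d = Nat.gcd m n) (ho : Odd (n / d)) (i b : ℕ) (hi : i < p ^ n) (hb : b < p ^ m)
    (α β q : ℕ) (hq : q = p ^ (2 * m * n / d))
    (hα : α = (q - 1) / (p ^ n - 1)) (hβ : β = (q - 1) / (p ^ m + 1)) :
    ¬ p ∣ Nat.choose ((b + 1) * β) (i * α) ↔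
      ∀ r < n, ∀ s < m, r % d = s % d →
        i / p ^ r % p ≤ b / p ^ s % p ∧ i / p ^ r % p ≤ p - 1 - b / p ^ s % p := by
  have hd0 : 0 < d := hd ▸ Nat.gcd_pos_of_pos_left _ hm
  have hdn : d ∣ n := hd ▸ Nat.gcd_dvd_right _ _
  have hdm : d ∣ m := hd ▸ Nat.gcd_dvd_left _ _
  obtain ⟨a0, a1, a2⟩ := alpha_eq hp hn hdm hd0 hq
  obtain ⟨b0, b1, b2⟩ := beta_eq hp hm hdn hd0 hq
  have hq0 : 0 < q := by rw [hq]; exact Nat.pow_pos hp.pos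
  have hy : i * α < p ^ (2 * m * n / d) := by
    rw [← hq]
    have : i * α ≤ q - 1 := by
      rw [← a1, hα, a2]; exact Nat.mul_le_mul_right _ (by omega)
    omega
  have hx : (b + 1) * β < p ^ (2 * m * n / d) := by
    rw [← hq]
    have : (b + 1) * β ≤ q - 1 := by
      rw [← b1, hβ, b2]; exact Nat.mul_le_mul_right _ (by omega)
    omega
  rw [lucas_iff hp _ _ _ hx hy]
  set x := (b + 1) * (p ^ m - 1) with hxd
  have hpm : 0 < p ^ m := Nat.pow_pos hp.pos
  have hxe : x = p ^ m * b + (p ^ m - (b + 1)) := by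
    obtain ⟨c, hc⟩ : ∃ c, p ^ m = b + 1 + c := ⟨p ^ m - (b + 1), by omega⟩
    rw [hxd, hc, show b + 1 + c - 1 = b + c by omega, show b + 1 + c - (b + 1) = c by omega]
    ring
  have hxlt : x < p ^ (2 * m) := by
    have : p ^ (2 * m) = p ^ m * p ^ m := by rw [two_mul, pow_add]
    have h3 : p ^ m * (b + 1) ≤ p ^ m * p ^ m := Nat.mul_le_mul_left _ hb
    rw [mul_add] at h3
    omega
  have hxd1 : ∀ s < m, x / p ^ s % p = p - 1 - b / p ^ s % p := by
    intro s hs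
    rw [← compl_digit p m b s hp.pos hb hs, hxe]
    obtain ⟨c, hc⟩ : ∃ c, m = s + (1 + c) := ⟨m - s - 1, by omega⟩
    have h1 : p ^ m = p ^ s * (p * p ^ c) := by rw [hc, pow_add, pow_add, pow_one]
    conv_lhs => rw [h1, mul_assoc, ← h1, Nat.mul_add_div (Nat.pow_pos hp.pos), mul_assoc,
      Nat.mul_add_mod]
  have hxd2 : ∀ s, x / p ^ (m + s) % p = b / p ^ s % p := by
    intro s
    rw [pow_add, ← Nat.div_div_eq_div_mul, hxe, Nat.mul_add_div hpm,
      Nat.div_eq_of_lt (a := p ^ m - (b + 1)) (by omega), add_zero]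
  have step : (∀ k < 2 * m * n / d, i * α / p ^ k % p ≤ (b + 1) * β / p ^ k % p) ↔
      ∀ k < 2 * m * n / d, i / p ^ (k % n) % p ≤ x / p ^ (k % (2 * m)) % p := by
    refine forall_congr' fun k => imp_congr_right fun hk => ?_
    rw [hα, a2, hβ, b2, ← mul_assoc, rep_digit' p n i _ k hn hi (by rw [← a0]; exact hk),
      rep_digit' p (2 * m) _ _ k (by omega) hxlt (by rw [← b0]; exact hk)]
  rw [step, crt_all n m d hn hm hd ho (fun r s => i / p ^ r % p ≤ x / p ^ s % p)]
  refine forall_congr' fun r => imp_congr_right fun hr => forall_congr' fun s =>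
    imp_congr_right fun hs => imp_congr_right fun _ => ?_
  rw [hxd1 s hs, hxd2, and_comm]

/-- pairs of tuples in one residue class -/
def Qrel (p N M : ℕ) (a : Fin N → Fin p) (b : Fin M → Fin p) : Prop :=
  ∀ r s, (a r : ℕ) ≤ b s ∧ (a r : ℕ) ≤ p - 1 - b s

open Classical in
lemma count_T (h N M : ℕ) (hM : 0 < M) :
    2 ^ N * Fintype.card {ab : (Fin N → Fin (2 * h + 1)) × (Fin M → Fin (2 * h + 1)) //
        Qrel (2 * h + 1) N M ab.1 ab.2}
      = (2 * h + 1 + 1) ^ N + ∑ i ∈ Finset.Icc 1 h,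
        ((2 * i + 1) ^ M - (2 * i - 1) ^ M) * (2 * h + 1 - 2 * i + 1) ^ N := by
  set p := 2 * h + 1 with hp
  let D : Fin p → ℕ := fun x => (x - h : ℕ) + (h - x : ℕ)
  let ν : (Fin M → Fin p) → ℕ := fun b => Finset.univ.sup (fun s => D (b s))
  have hν : ∀ b i, ν b ≤ i ↔ ∀ s, D (b s) ≤ i := by
    intro b i; simp [ν, Finset.sup_le_iff]
  have hνh : ∀ b, ν b ≤ h := by
    intro b; rw [hν]; intro s
    have := (b s).2
    simp only [D]; omega
  have hQ : ∀ a b, Qrel p N M a b ↔ ∀ r, (a r : ℕ) ≤ h - ν b := by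
    intro a b
    constructor
    · intro hq r
      have h1 : ν b ≤ h - a r := by
        rw [hν]; intro s
        have := hq r s
        have := (b s).2
        simp only [D]; omega
      have h2 : (a r : ℕ) ≤ h := by
        have := hq r ⟨0, hM⟩
        omega
      omega
    · intro hq r s
      have h1 := (hν b (ν b)).1 le_rfl s
      have h2 := hq r
      have := hνh b
      have := (b s).2
      simp only [D] at h1
      omega
  have cI : ∀ t ≤ h, (Finset.univ.filter (fun x : Fin p => (x : ℕ) ≤ t)).card = t + 1 := by
    intro t ht
    rw [← Finset.card_map Fin.valEmbedding]
    have : (Finset.univ.filter (fun x : Fin p => (x : ℕ) ≤ t)).map Fin.valEmbedding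
        = Finset.Icc 0 t := by
      ext y
      simp only [Finset.mem_map, Finset.mem_filter, Finset.mem_univ, true_and,
        Fin.valEmbedding_apply, Finset.mem_Icc]
      exact ⟨fun ⟨x, hx, hy⟩ => by omega, fun hy => ⟨⟨y, by omega⟩, hy.2, rfl⟩⟩
    rw [this, Nat.card_Icc]; omega
  have cD : ∀ t ≤ h, (Finset.univ.filter (fun x : Fin p => D x ≤ t)).card = 2 * t + 1 := by
    intro t ht
    rw [← Finset.card_map Fin.valEmbedding]
    have : (Finset.univ.filter (fun x : Fin p => D x ≤ t)).map Fin.valEmbedding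
        = Finset.Icc (h - t) (h + t) := by
      ext y
      simp only [Finset.mem_map, Finset.mem_filter, Finset.mem_univ, true_and,
        Fin.valEmbedding_apply, Finset.mem_Icc, D]
      exact ⟨fun ⟨x, hx, hy⟩ => by omega, fun hy => ⟨⟨y, by omega⟩, by simp only; omega, rfl⟩⟩
    rw [this, Nat.card_Icc]; omega
  have cA : ∀ t ≤ h, Fintype.card {a : Fin N → Fin p // ∀ r, (a r : ℕ) ≤ t} = (t + 1) ^ N := by
    intro t ht
    rw [Fintype.card_subtype]
    have : (Finset.univ.filter (fun a : Fin N → Fin p => ∀ r, (a r : ℕ) ≤ t))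
      = Fintype.piFinset (fun _ => Finset.univ.filter (fun x : Fin p => (x : ℕ) ≤ t)) := by
      ext a; simp
    rw [this, Fintype.card_piFinset]
    simp [cI t ht]
  have cB : ∀ t ≤ h, (Finset.univ.filter (fun b => ν b ≤ t)).card = (2 * t + 1) ^ M := by
    intro t ht
    have : (Finset.univ.filter (fun b => ν b ≤ t))
      = Fintype.piFinset (fun _ => Finset.univ.filter (fun x : Fin p => D x ≤ t)) := by
      ext a; simp [hν]
    rw [this, Fintype.card_piFinset]
    simp [cD t ht]
  have cE : ∀ t, 1 ≤ t → t ≤ h →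
      (Finset.univ.filter (fun b => ν b = t)).card = (2 * t + 1) ^ M - (2 * t - 1) ^ M := by
    intro t h1 ht
    have e1 := cB t ht
    have e2 := cB (t - 1) (by omega)
    rw [show 2 * (t - 1) + 1 = 2 * t - 1 by omega] at e2
    rw [← e1, ← e2, ← Finset.card_sdiff_of_subset]
    · congr 1; ext b; simp only [Finset.mem_filter, Finset.mem_univ, true_and, Finset.mem_sdiff]; omega
    · intro b
      simp only [Finset.mem_filter, Finset.mem_univ, true_and]; omega
  have e : {ab : (Fin N → Fin p) × (Fin M → Fin p) // Qrel p N M ab.1 ab.2} ≃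
      (b : Fin M → Fin p) × {a : Fin N → Fin p // ∀ r, (a r : ℕ) ≤ h - ν b} :=
    { toFun := fun x => ⟨x.1.2, x.1.1, (hQ _ _).1 x.2⟩
      invFun := fun y => ⟨(y.2.1, y.1), (hQ _ _).2 y.2.2⟩
      left_inv := fun x => rfl
      right_inv := fun y => rfl }
  rw [Fintype.card_congr e, Fintype.card_sigma]
  have s1 : ∑ b, Fintype.card {a : Fin N → Fin p // ∀ r, (a r : ℕ) ≤ h - ν b}
      = ∑ b, (h - ν b + 1) ^ N := Finset.sum_congr rfl fun b _ => cA _ (by omega)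
  rw [s1]
  have s2 : ∑ b, (h - ν b + 1) ^ N
      = ∑ t ∈ Finset.range (h + 1), (Finset.univ.filter (fun b => ν b = t)).card * (h - t + 1) ^ N := by
    rw [← Finset.sum_fiberwise_of_maps_to (s := Finset.univ) (t := Finset.range (h + 1)) (g := ν)
      (fun b _ => Finset.mem_range.2 (by have := hνh b; omega))]
    refine Finset.sum_congr rfl fun t _ => ?_
    rw [Finset.sum_congr rfl (g := fun _ => (h - t + 1) ^ N), Finset.sum_const, smul_eq_mul]
    intro b hb
    rw [(Finset.mem_filter.1 hb).2]
  rw [s2, Finset.mul_sum, Finset.range_eq_Ico, Finset.sum_eq_sum_Ico_succ_bot (by omega)]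
  congr 1
  · have := cB 0 (by omega)
    simp only [Nat.le_zero] at this
    rw [this]
    simp only [mul_zero, zero_add, one_pow, one_mul, Nat.sub_zero]
    rw [← mul_pow]; congr 1
  · refine Finset.sum_congr (by ext; simp only [Finset.mem_Ico, Finset.mem_Icc]; omega) fun t ht => ?_
    rw [Finset.mem_Icc] at ht
    rw [cE t ht.1 ht.2, mul_left_comm, ← mul_pow]
    congr 2
    all_goals omega

open Classical in
lemma count_U (p d N M : ℕ) :
    Fintype.card {ab : (Fin (N * d) → Fin p) × (Fin (M * d) → Fin p) //
        ∀ (r : Fin (N * d)) (s : Fin (M * d)), (r : ℕ) % d = s % d →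
          (ab.1 r : ℕ) ≤ ab.2 s ∧ (ab.1 r : ℕ) ≤ p - 1 - ab.2 s}
      = (Fintype.card {ab : (Fin N → Fin p) × (Fin M → Fin p) // Qrel p N M ab.1 ab.2}) ^ d := by
  have hmod : ∀ {K : ℕ} (x : Fin K × Fin d), ((finProdFinEquiv x : Fin (K * d)) : ℕ) % d = x.2 := by
    intro K x
    simp [finProdFinEquiv, Nat.mod_eq_of_lt x.2.2]
  let E : ∀ K, (Fin (K * d) → Fin p) ≃ (Fin d → Fin K → Fin p) := fun K =>
    (finProdFinEquiv.symm.arrowCongr (Equiv.refl _)).trans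
      (((Equiv.prodComm _ _).arrowCongr (Equiv.refl _)).trans (Equiv.curry _ _ _))
  have hE : ∀ K f c r, E K f c r = f (finProdFinEquiv (r, c)) := fun K f c r => rfl
  have e1 : {ab : (Fin (N * d) → Fin p) × (Fin (M * d) → Fin p) //
        ∀ (r : Fin (N * d)) (s : Fin (M * d)), (r : ℕ) % d = s % d →
          (ab.1 r : ℕ) ≤ ab.2 s ∧ (ab.1 r : ℕ) ≤ p - 1 - ab.2 s} ≃
      {ab : (Fin d → Fin N → Fin p) × (Fin d → Fin M → Fin p) //
        ∀ c, Qrel p N M (ab.1 c) (ab.2 c)} := by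
    refine Equiv.subtypeEquiv ((E N).prodCongr (E M)) ?_
    rintro ⟨a, b⟩
    constructor
    · intro h c r s
      exact h (finProdFinEquiv (r, c)) (finProdFinEquiv (s, c)) (by rw [hmod, hmod])
    · intro h r s hrs
      obtain ⟨⟨r, c⟩, rfl⟩ := finProdFinEquiv.surjective r
      obtain ⟨⟨s, c'⟩, rfl⟩ := finProdFinEquiv.surjective s
      rw [hmod, hmod] at hrs
      obtain rfl : c = c' := Fin.ext hrs
      exact h c r s
  have e2 : {ab : (Fin d → Fin N → Fin p) × (Fin d → Fin M → Fin p) //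
        ∀ c, Qrel p N M (ab.1 c) (ab.2 c)} ≃
      (Fin d → {ab : (Fin N → Fin p) × (Fin M → Fin p) // Qrel p N M ab.1 ab.2}) :=
    { toFun := fun x c => ⟨(x.1.1 c, x.1.2 c), x.2 c⟩
      invFun := fun y => ⟨(fun c => (y c).1.1, fun c => (y c).1.2), fun c => (y c).2⟩
      left_inv := fun x => rfl
      right_inv := fun y => rfl }
  rw [Fintype.card_congr (e1.trans e2), Fintype.card_fun, Fintype.card_fin]

open Classical in
lemma count_V (p d n m : ℕ) (hdn : d ∣ n) (hdm : d ∣ m) :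
    ((Finset.range (p ^ n) ×ˢ Finset.range (p ^ m)).filter (fun ib : ℕ × ℕ =>
      ∀ r < n, ∀ s < m, r % d = s % d →
        ib.1 / p ^ r % p ≤ ib.2 / p ^ s % p ∧ ib.1 / p ^ r % p ≤ p - 1 - ib.2 / p ^ s % p)).card
      = (Fintype.card {ab : (Fin (n / d) → Fin p) × (Fin (m / d) → Fin p) //
          Qrel p (n / d) (m / d) ab.1 ab.2}) ^ d := by
  rw [← count_U, Nat.div_mul_cancel hdn, Nat.div_mul_cancel hdm, Fintype.card_subtype]
  symm
  refine Finset.card_bij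
    (fun ab _ => ((finFunctionFinEquiv ab.1 : ℕ), (finFunctionFinEquiv ab.2 : ℕ))) ?_ ?_ ?_
  · rintro ⟨a, b⟩ hab
    simp only [Finset.mem_filter, Finset.mem_univ, true_and, Finset.mem_product,
      Finset.mem_range, Fin.is_lt, true_and] at hab ⊢
    intro r hr s hs hrs
    have := hab ⟨r, hr⟩ ⟨s, hs⟩ hrs
    have h1 : ∀ (K : ℕ) (f : Fin K → Fin p) (i : Fin K),
        (finFunctionFinEquiv f : ℕ) / p ^ (i : ℕ) % p = f i := by
      intro K f i
      conv_rhs => rw [← finFunctionFinEquiv.symm_apply_apply f]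
      rfl
    rw [h1 _ a ⟨r, hr⟩, h1 _ b ⟨s, hs⟩]
    exact this
  · rintro ⟨a, b⟩ _ ⟨a', b'⟩ _ h
    simp only [Prod.mk.injEq] at h
    have h1 := finFunctionFinEquiv.injective (Fin.ext h.1)
    have h2 := finFunctionFinEquiv.injective (Fin.ext h.2)
    rw [h1, h2]
  · rintro ⟨i, b⟩ h
    simp only [Finset.mem_filter, Finset.mem_product, Finset.mem_range] at h
    obtain ⟨⟨hi, hb⟩, h⟩ := h
    refine ⟨(finFunctionFinEquiv.symm ⟨i, hi⟩, finFunctionFinEquiv.symm ⟨b, hb⟩), ?_, by simp⟩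
    simp only [Finset.mem_filter, Finset.mem_univ, true_and]
    intro r s hrs
    exact h r r.2 s s.2 hrs


/-- Theorem 4.8 (ii), counting part, `p` odd and `n/d` odd: with `d = gcd(m,n)`,
`q = p^(2mn/d)`, `α = (q−1)/(pⁿ−1)`, `β = (q−1)/(pᵐ+1)`, the number of pairs `(i, j)`
with `iα ≤ jβ ≤ q−1` and `p ∤ C(jβ, iα)` equals
`2^(−n)((p+1)^(n/d) + Σ_{i=1}^{(p−1)/2} ((2i+1)^(m/d) − (2i−1)^(m/d))(p−2i+1)^(n/d))^d
  + pⁿ + 1` (stated here multiplied through by `2^n`). -/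
theorem stmt_17 (p m n : ℕ) (hp : p.Prime) (hodd : Odd p) (hm : 0 < m) (hn : 0 < n)
    (d q α β : ℕ) (hd : d = Nat.gcd m n) (hndodd : Odd (n / d))
    (hq : q = p ^ (2 * m * n / d))
    (hα : α = (q - 1) / (p ^ n - 1)) (hβ : β = (q - 1) / (p ^ m + 1)) :
    2 ^ n * ((Finset.range q ×ˢ Finset.range q).filter
      (fun ij : ℕ × ℕ => ij.1 * α ≤ ij.2 * β ∧ ij.2 * β ≤ q - 1 ∧
        ¬ p ∣ Nat.choose (ij.2 * β) (ij.1 * α))).card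
    = ((p + 1) ^ (n / d) + ∑ i ∈ Finset.Icc 1 ((p - 1) / 2),
        ((2 * i + 1) ^ (m / d) - (2 * i - 1) ^ (m / d)) * (p - 2 * i + 1) ^ (n / d)) ^ d
      + 2 ^ n * (p ^ n + 1) := by
  classical
  have hd0 : 0 < d := hd ▸ Nat.gcd_pos_of_pos_left _ hm
  have hdn : d ∣ n := hd ▸ Nat.gcd_dvd_right _ _
  have hdm : d ∣ m := hd ▸ Nat.gcd_dvd_left _ _
  obtain ⟨a0, a1, a2⟩ := alpha_eq hp hn hdm hd0 hq
  obtain ⟨b0, b1, b2⟩ := beta_eq hp hm hdn hd0 hq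
  rw [← a2, ← hα] at a1
  rw [← b2, ← hβ] at b1
  have hM : 0 < m / d := Nat.div_pos (Nat.le_of_dvd hm hdm) hd0
  have hN : 0 < n / d := Nat.div_pos (Nat.le_of_dvd hn hdn) hd0
  have hp3 : 3 ≤ p := by
    have := hp.two_le
    obtain ⟨k, hk⟩ := hodd
    omega
  have hnq : p ^ n ≤ q := by
    rw [hq, a0]
    exact Nat.pow_le_pow_right hp.pos (Nat.le_mul_of_pos_right _ (by omega))
  have hpm : 3 ≤ p ^ m := le_trans hp3 (Nat.le_self_pow (by omega) p)
  have hpn : 3 ≤ p ^ n := le_trans hp3 (Nat.le_self_pow (by omega) p)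
  have hmq : p ^ m + 2 ≤ q := by
    have h1 : p ^ (2 * m) ≤ q := by
      rw [hq, b0]
      exact Nat.pow_le_pow_right hp.pos (Nat.le_mul_of_pos_right _ hN)
    have h2 : p ^ (2 * m) = p ^ m * p ^ m := by rw [two_mul, pow_add]
    have h3 : 3 * p ^ m ≤ p ^ m * p ^ m := Nat.mul_le_mul_right _ hpm
    omega
  have hα0 : 0 < α := by
    rcases Nat.eq_zero_or_pos α with h | h
    · rw [h] at a1; omega
    · exact h
  have hβ0 : 0 < β := by
    rcases Nat.eq_zero_or_pos β with h | h
    · rw [h] at b1; omega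
    · exact h
  have hle : ∀ x y, ¬ p ∣ Nat.choose x y → y ≤ x := by
    intro x y h
    by_contra! h2
    exact h (by rw [Nat.choose_eq_zero_of_lt h2]; exact dvd_zero _)
  have htop : ∀ i < p ^ n, ¬ p ∣ Nat.choose ((p ^ m + 1) * β) (i * α) := by
    intro i hi
    have h1 : i * α ≤ q - 1 := by rw [← a1]; exact Nat.mul_le_mul_right _ (by omega)
    rw [b1, lucas_iff hp (2 * m * n / d) _ _ (by omega) (by omega)]
    intro k hk
    have h2 := compl_digit p (2 * m * n / d) 0 k hp.pos (by omega) hk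
    rw [zero_add, ← hq] at h2
    rw [h2, Nat.zero_div, Nat.zero_mod]
    have := Nat.mod_lt (i * α / p ^ k) hp.pos
    omega
  set V := (Finset.range (p ^ n) ×ˢ Finset.range (p ^ m)).filter (fun ib : ℕ × ℕ =>
      ∀ r < n, ∀ s < m, r % d = s % d →
        ib.1 / p ^ r % p ≤ ib.2 / p ^ s % p ∧ ib.1 / p ^ r % p ≤ p - 1 - ib.2 / p ^ s % p)
    with hV
  have hF : (Finset.range q ×ˢ Finset.range q).filter
      (fun ij : ℕ × ℕ => ij.1 * α ≤ ij.2 * β ∧ ij.2 * β ≤ q - 1 ∧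
        ¬ p ∣ Nat.choose (ij.2 * β) (ij.1 * α))
      = (V.image (fun ib => (ib.1, ib.2 + 1))) ∪
        ((Finset.range (p ^ n)).image (fun i => (i, p ^ m + 1)) ∪ {(0, 0)}) := by
    ext ⟨i, j⟩
    simp only [Finset.mem_filter, Finset.mem_product, Finset.mem_range, Finset.mem_union,
      Finset.mem_image, Finset.mem_singleton, Prod.mk.injEq, Prod.exists, hV]
    constructor
    · rintro ⟨⟨_, _⟩, h1, h2, h3⟩
      have hj : j ≤ p ^ m + 1 := by
        rw [← b1] at h2
        exact Nat.le_of_mul_le_mul_right h2 hβ0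
      have hi : i < p ^ n := by
        have h4 := h1.trans h2
        rw [← a1] at h4
        have := Nat.le_of_mul_le_mul_right h4 hα0
        omega
      rcases Nat.eq_zero_or_pos j with h | h
      · right; right
        subst h
        rw [zero_mul, Nat.le_zero, Nat.mul_eq_zero] at h1
        omega
      · rcases Nat.lt_or_ge (p ^ m) j with h' | h'
        · right; left
          exact ⟨i, hi, rfl, by omega⟩
        · left
          obtain ⟨b, rfl⟩ : ∃ b, j = b + 1 := ⟨j - 1, by omega⟩
          exact ⟨i, b, ⟨⟨hi, by omega⟩, (core_iff hp hm hn hd hndodd i b hi (by omega)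
            α β q hq hα hβ).1 h3⟩, rfl, rfl⟩
    · rintro (⟨i, b, ⟨⟨hi, hb⟩, h⟩, rfl, rfl⟩ | ⟨i, hi, rfl, rfl⟩ | ⟨rfl, rfl⟩)
      · have h3 := (core_iff hp hm hn hd hndodd i b hi hb α β q hq hα hβ).2 h
        refine ⟨⟨by omega, by omega⟩, hle _ _ h3, ?_, h3⟩
        rw [← b1]
        exact Nat.mul_le_mul_right _ (by omega)
      · have h3 := htop i hi
        exact ⟨⟨by omega, by omega⟩, hle _ _ h3, b1.le, h3⟩
      · refine ⟨⟨by omega, by omega⟩, by simp, by simp, ?_⟩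
        simpa using hp.one_lt.ne'
  have hcard : ((Finset.range q ×ˢ Finset.range q).filter
      (fun ij : ℕ × ℕ => ij.1 * α ≤ ij.2 * β ∧ ij.2 * β ≤ q - 1 ∧
        ¬ p ∣ Nat.choose (ij.2 * β) (ij.1 * α))).card = V.card + (p ^ n + 1) := by
    rw [hF, Finset.card_union_of_disjoint, Finset.card_union_of_disjoint,
      Finset.card_image_of_injective, Finset.card_image_of_injective, Finset.card_range,
      Finset.card_singleton]
    · intro x y h; simpa using h
    · rintro ⟨x, x'⟩ ⟨y, y'⟩ h; simpa using h
    · rw [Finset.disjoint_left]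
      rintro ⟨i, j⟩ h h'
      simp only [Finset.mem_image, Finset.mem_singleton, Prod.mk.injEq] at h h'
      obtain ⟨_, _, _, h2⟩ := h
      omega
    · rw [Finset.disjoint_left]
      rintro ⟨i, j⟩ h h'
      simp only [Finset.mem_filter, Finset.mem_product, Finset.mem_range, Finset.mem_union,
        Finset.mem_image, Finset.mem_singleton, Prod.mk.injEq, Prod.exists, hV] at h h'
      obtain ⟨_, b, ⟨⟨_, hb⟩, _⟩, _, h2⟩ := h
      rcases h' with ⟨_, _, _, h3⟩ | ⟨_, h3⟩ <;> omega
  rw [hcard, mul_add]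
  congr 1
  obtain ⟨h, rfl⟩ := hodd
  have hT := count_T h (n / d) (m / d) hM
  rw [show (2 * h + 1 - 1) / 2 = h by omega, ← hT, mul_pow, ← pow_mul, Nat.div_mul_cancel hdn]
  congr 1
  rw [hV]
  convert count_V (2 * h + 1) d n m hdn hdm
end

section
/- Let p be an odd prime and r a positive integer. The number of natural numbers u with 0 ≤ u ≤ p^{3r} − 1 such that every digit in the base-p expansion of u is at most (p−1)/2 and p^r − 1 divides u equals 1 + ((p+1)(p+3)/8)^r. -/
def GoodD (p m u : ℕ) : Prop := ∀ c ∈ Nat.digits p u, c ≤ m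

theorem goodD_zero (p m : ℕ) : GoodD p m 0 := by
  simp [GoodD]

theorem goodD_add (p m : ℕ) (hp : 1 < p) (d a : ℕ) (hd : d < p) :
    GoodD p m (d + p * a) ↔ d ≤ m ∧ GoodD p m a := by
  by_cases h : d = 0 ∧ a = 0
  · obtain ⟨rfl, rfl⟩ := h
    simp [GoodD]
  · have h' : d ≠ 0 ∨ a ≠ 0 := by tauto
    unfold GoodD
    rw [Nat.digits_add p hp d a hd h']
    simp

theorem goodD_step (p m : ℕ) (hp : 1 < p) (a : ℕ) :
    GoodD p m a ↔ a % p ≤ m ∧ GoodD p m (a / p) := by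
  rw [← goodD_add p m hp (a % p) (a / p) (Nat.mod_lt _ (by omega)), Nat.mod_add_div]

theorem goodD_block (p m : ℕ) (hp : 1 < p) (r : ℕ) : ∀ a b : ℕ, a < p ^ r →
    (GoodD p m (a + p ^ r * b) ↔ GoodD p m a ∧ GoodD p m b) := by
  induction r with
  | zero =>
    intro a b ha
    have : a = 0 := by simpa using ha
    subst this
    simp [goodD_zero]
  | succ r ih =>
    intro a b ha
    have hlt : a / p < p ^ r := by
      apply Nat.div_lt_of_lt_mul
      rwa [pow_succ, mul_comm] at ha
    have e : a + p ^ (r + 1) * b = a % p + p * (a / p + p ^ r * b) := by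
      conv_lhs => rw [← Nat.mod_add_div a p]
      ring
    rw [e, goodD_add p m hp _ _ (Nat.mod_lt _ (by omega)), ih _ _ hlt, goodD_step p m hp a]
    tauto

theorem goodD_bound (m r : ℕ) (hm : 0 < m) : ∀ a : ℕ, a < (2 * m + 1) ^ r →
    GoodD (2 * m + 1) m a → 2 * a + 1 ≤ (2 * m + 1) ^ r := by
  induction r with
  | zero => intro a ha _; simp at ha; simp [ha]
  | succ r ih =>
    intro a ha hg
    rw [goodD_step _ _ (by omega)] at hg
    have hlt : a / (2 * m + 1) < (2 * m + 1) ^ r := by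
      apply Nat.div_lt_of_lt_mul
      rwa [pow_succ, mul_comm] at ha
    have h1 := ih _ hlt hg.2
    have h2 := Nat.mod_add_div a (2 * m + 1)
    rw [pow_succ]
    nlinarith [hg.1]

open Classical in
noncomputable def TT (m r : ℕ) : Finset (ℕ × ℕ × ℕ) :=
  (Finset.range ((2 * m + 1) ^ r) ×ˢ Finset.range ((2 * m + 1) ^ r) ×ˢ
    Finset.range ((2 * m + 1) ^ r)).filter
    (fun x => GoodD (2 * m + 1) m x.1 ∧ GoodD (2 * m + 1) m x.2.1 ∧ GoodD (2 * m + 1) m x.2.2 ∧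
      x.1 + x.2.1 + x.2.2 + 1 = (2 * m + 1) ^ r)

def DD (m : ℕ) : Finset (ℕ × ℕ × ℕ) :=
  (Finset.range (m + 1) ×ˢ Finset.range (m + 1) ×ˢ Finset.range (m + 1)).filter
    (fun x => x.1 + x.2.1 + x.2.2 = 2 * m)

theorem card_DD (m : ℕ) : (DD m).card = (m + 1) * (m + 2) / 2 := by
  have h : (DD m).card = ((Finset.range (m + 1)).sigma (fun k => Finset.range (k + 1))).card := by
    apply Finset.card_nbij' (fun x => (⟨x.1, x.2.1 - (m - x.1)⟩ : Σ _ : ℕ, ℕ))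
      (fun y => (y.1, y.2 + (m - y.1), m - y.2))
    · rintro ⟨a, b, c⟩ h
      simp [DD] at h ⊢
      omega
    · rintro ⟨a, b⟩ h
      simp [DD] at h ⊢
      omega
    · rintro ⟨a, b, c⟩ h
      simp [DD] at h ⊢
      omega
    · rintro ⟨a, b⟩ h
      simp at h ⊢
  rw [h, Finset.card_sigma]
  simp only [Finset.card_range]
  have := Finset.sum_range_id_mul_two (m + 2)
  rw [Finset.sum_range_succ'] at this
  simp at this
  rw [mul_comm (m + 1)]
  omega

theorem card_TT_succ (m r : ℕ) (hm : 0 < m) :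
    (TT m (r + 1)).card = (DD m).card * (TT m r).card := by
  rw [← Finset.card_product]
  have hp : 1 < 2 * m + 1 := by omega
  have hq : 0 < (2 * m + 1) ^ r := by positivity
  have lt_iff : ∀ a, a < (2 * m + 1) ^ (r + 1) ↔ a / (2 * m + 1) < (2 * m + 1) ^ r := by
    intro a
    rw [Nat.div_lt_iff_lt_mul (by omega), pow_succ]
  apply Finset.card_nbij'
    (fun x => ((x.1 % (2 * m + 1), x.2.1 % (2 * m + 1), x.2.2 % (2 * m + 1)),
      (x.1 / (2 * m + 1), x.2.1 / (2 * m + 1), x.2.2 / (2 * m + 1))))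
    (fun y => (y.1.1 + (2 * m + 1) * y.2.1, y.1.2.1 + (2 * m + 1) * y.2.2.1,
      y.1.2.2 + (2 * m + 1) * y.2.2.2))
  · rintro ⟨a, b, c⟩ h
    simp only [TT, DD, Finset.coe_filter, Finset.mem_product, Finset.mem_range, Set.mem_ofPred_eq,
      Finset.coe_product, Set.mem_prod, lt_iff] at h ⊢
    rw [goodD_step _ _ hp a, goodD_step _ _ hp b, goodD_step _ _ hp c] at h
    obtain ⟨⟨ha, hb, hc⟩, ⟨a1, a2⟩, ⟨b1, b2⟩, ⟨c1, c2⟩, hs⟩ := h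
    have ea := Nat.mod_add_div a (2 * m + 1)
    have eb := Nat.mod_add_div b (2 * m + 1)
    have ec := Nat.mod_add_div c (2 * m + 1)
    generalize a % (2 * m + 1) = d at *
    generalize b % (2 * m + 1) = e at *
    generalize c % (2 * m + 1) = f at *
    generalize a / (2 * m + 1) = a' at *
    generalize b / (2 * m + 1) = b' at *
    generalize c / (2 * m + 1) = c' at *
    rw [pow_succ] at hs
    generalize (2 * m + 1) ^ r = q at *
    have key : d + e + f + 1 + (2 * m + 1) * (a' + b' + c') = (2 * m + 1) * q := by
      rw [← ea, ← eb, ← ec] at hs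
      linarith
    have hdv : (2 * m + 1) ∣ d + e + f + 1 := by
      rw [← Nat.dvd_add_left (Dvd.intro (a' + b' + c') rfl), key]
      exact Dvd.intro _ rfl
    obtain ⟨k, hk⟩ := hdv
    have hk1 : k = 1 := by
      have : 0 < k := by
        rcases Nat.eq_zero_or_pos k with h | h
        · simp [h] at hk
        · exact h
      have : k < 2 := by
        by_contra h
        have : 2 ≤ k := by omega
        nlinarith
      omega
    subst hk1
    have hq' : 1 + (a' + b' + c') = q := by
      apply Nat.eq_of_mul_eq_mul_left (show 0 < 2 * m + 1 by omega)
      linarith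
    refine ⟨⟨⟨by omega, by omega, by omega⟩, by omega⟩, ⟨ha, hb, hc⟩, a2, b2, c2, by omega⟩
  · rintro ⟨⟨d, e, f⟩, a, b, c⟩ h
    simp only [TT, DD, Finset.coe_filter, Finset.mem_product, Finset.mem_range, Set.mem_ofPred_eq,
      Finset.coe_product, Set.mem_prod, lt_iff] at h ⊢
    obtain ⟨⟨⟨hd, he, hf⟩, hs⟩, ⟨ha, hb, hc⟩, ga, gb, gc, ht⟩ := h
    rw [goodD_add _ _ hp _ _ (by omega), goodD_add _ _ hp _ _ (by omega),
      goodD_add _ _ hp _ _ (by omega)]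
    simp only [Nat.add_mul_div_left _ _ (show 0 < 2 * m + 1 by omega)]
    rw [Nat.div_eq_of_lt (show d < 2 * m + 1 by omega),
      Nat.div_eq_of_lt (show e < 2 * m + 1 by omega),
      Nat.div_eq_of_lt (show f < 2 * m + 1 by omega)]
    refine ⟨⟨by omega, by omega, by omega⟩, ⟨by omega, ga⟩, ⟨by omega, gb⟩, ⟨by omega, gc⟩, ?_⟩
    rw [pow_succ, ← ht]
    linarith
  · rintro ⟨a, b, c⟩ h
    simp [Nat.mod_add_div]
  · rintro ⟨⟨d, e, f⟩, a, b, c⟩ h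
    simp only [DD, Finset.coe_filter, Finset.mem_product, Finset.mem_range, Set.mem_ofPred_eq,
      Finset.coe_product, Set.mem_prod] at h
    obtain ⟨⟨⟨hd, he, hf⟩, hs⟩, -⟩ := h
    simp only [Nat.add_mul_div_left _ _ (show 0 < 2 * m + 1 by omega), Nat.add_mul_mod_self_left]
    rw [Nat.div_eq_of_lt (show d < 2 * m + 1 by omega),
      Nat.div_eq_of_lt (show e < 2 * m + 1 by omega),
      Nat.div_eq_of_lt (show f < 2 * m + 1 by omega),
      Nat.mod_eq_of_lt (show d < 2 * m + 1 by omega),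
      Nat.mod_eq_of_lt (show e < 2 * m + 1 by omega),
      Nat.mod_eq_of_lt (show f < 2 * m + 1 by omega)]
    simp

theorem card_TT (m r : ℕ) (hm : 0 < m) : (TT m r).card = ((m + 1) * (m + 2) / 2) ^ r := by
  induction r with
  | zero =>
    have : TT m 0 = {(0, 0, 0)} := by
      ext ⟨a, b, c⟩
      simp only [TT, Finset.mem_filter, Finset.mem_product, Finset.mem_range, pow_zero,
        Finset.mem_singleton, Prod.mk.injEq]
      constructor
      · omega
      · rintro ⟨rfl, rfl, rfl⟩
        simp [goodD_zero]
    simp [this]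
  | succ r ih => rw [card_TT_succ m r hm, ih, card_DD, pow_succ, mul_comm]

/-- For `p` an odd prime and `r ≥ 1`, the number of `u ∈ {0, …, p^(3r)−1}` all of whose
base-`p` digits are at most `(p−1)/2` and which are divisible by `p^r − 1` equals
`1 + ((p+1)(p+3)/8)^r`. -/
theorem stmt_18 (p r : ℕ) (hp : p.Prime) (hodd : Odd p) (hr : 0 < r) :
    ((Finset.range (p ^ (3 * r))).filter
      (fun u => (∀ c ∈ Nat.digits p u, c ≤ (p - 1) / 2) ∧ (p ^ r - 1) ∣ u)).card
    = 1 + ((p + 1) * (p + 3) / 8) ^ r := by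
  obtain ⟨m, rfl⟩ := hodd
  have hm : 0 < m := by
    rcases Nat.eq_zero_or_pos m with h | h
    · subst h; exact absurd hp (by norm_num)
    · exact h
  have e1 : (2 * m + 1 - 1) / 2 = m := by omega
  have e2 : (2 * m + 1 + 1) * (2 * m + 1 + 3) / 8 = (m + 1) * (m + 2) / 2 := by
    rw [show (2 * m + 1 + 1) * (2 * m + 1 + 3) = 4 * ((m + 1) * (m + 2)) by ring]
    omega
  rw [e1, e2, ← card_TT m r hm]
  have hnot : ((0, 0, 0) : ℕ × ℕ × ℕ) ∉ TT m r := by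
    simp only [TT, Finset.mem_filter, not_and]
    intro _ _ _ _ h
    have : 1 < (2 * m + 1) ^ r := Nat.one_lt_pow (by omega) (by omega)
    omega
  rw [add_comm 1 (TT m r).card, ← Finset.card_cons hnot]
  have hp1 : 1 < 2 * m + 1 := by omega
  have hq : 1 < (2 * m + 1) ^ r := Nat.one_lt_pow (by omega) (by omega)
  have blk := goodD_block (2 * m + 1) m hp1 r
  have bnd := goodD_bound m r hm
  have e3 : (2 * m + 1) ^ (3 * r) =
      (2 * m + 1) ^ r * ((2 * m + 1) ^ r * (2 * m + 1) ^ r) := by ring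
  have memTT : ∀ a b c, (a, b, c) ∈ TT m r ↔ (a < (2 * m + 1) ^ r ∧ b < (2 * m + 1) ^ r ∧
      c < (2 * m + 1) ^ r) ∧ GoodD (2 * m + 1) m a ∧ GoodD (2 * m + 1) m b ∧
      GoodD (2 * m + 1) m c ∧ a + b + c + 1 = (2 * m + 1) ^ r := by
    intro a b c
    simp [TT]
  have g0 := goodD_zero (2 * m + 1) m
  rw [e3]
  generalize (2 * m + 1) ^ r = q at *
  have hq0 : 0 < q := by omega
  have memC : ∀ a b c, (a, b, c) ∈ Finset.cons (0, 0, 0) (TT m r) hnot ↔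
      (a < q ∧ b < q ∧ c < q) ∧ GoodD (2 * m + 1) m a ∧ GoodD (2 * m + 1) m b ∧
      GoodD (2 * m + 1) m c ∧ (q - 1) ∣ a + b + c := by
    intro a b c
    rw [Finset.mem_cons, memTT]
    constructor
    · rintro (h | ⟨h1, h2, h3, h4, h5⟩)
      · simp only [Prod.mk.injEq] at h
        obtain ⟨rfl, rfl, rfl⟩ := h
        exact ⟨⟨hq0, hq0, hq0⟩, g0, g0, g0, by simp⟩
      · exact ⟨h1, h2, h3, h4, ⟨1, by omega⟩⟩
    · rintro ⟨h1, h2, h3, h4, k, hk⟩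
      have b1 := bnd a h1.1 h2
      have b2 := bnd b h1.2.1 h3
      have b3 := bnd c h1.2.2 h4
      have hk2 : k < 2 := by
        by_contra h
        have : (q - 1) * 2 ≤ (q - 1) * k := Nat.mul_le_mul_left _ (by omega)
        omega
      interval_cases k
      · left
        simp only [Prod.mk.injEq]
        omega
      · right
        exact ⟨h1, h2, h3, h4, by omega⟩
  have hdv : ∀ a b c, (q - 1) ∣ a + q * (b + q * c) ↔ (q - 1) ∣ a + b + c := by
    intro a b c
    obtain ⟨s, rfl⟩ : ∃ s, q = s + 1 := ⟨q - 1, by omega⟩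
    rw [show a + (s + 1) * (b + (s + 1) * c) = a + b + c + s * (b + s * c + 2 * c) by ring]
    rw [Nat.add_sub_cancel]
    exact (Nat.dvd_add_left (Dvd.intro _ rfl))
  symm
  apply Finset.card_nbij' (fun x => x.1 + q * (x.2.1 + q * x.2.2))
    (fun u => (u % q, u / q % q, u / q / q))
  · rintro ⟨a, b, c⟩ h
    rw [Finset.mem_coe, memC] at h
    obtain ⟨⟨ha, hb, hc⟩, h2, h3, h4, h5⟩ := h
    simp only [Finset.coe_filter, Finset.mem_range, Set.mem_ofPred_eq]
    change _ ∧ GoodD (2 * m + 1) m _ ∧ _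
    rw [blk _ _ ha, blk _ _ hb, hdv]
    refine ⟨?_, ⟨h2, h3, h4⟩, h5⟩
    have : b + q * c + 1 ≤ q * q := by nlinarith
    nlinarith
  · intro u h
    simp only [Finset.coe_filter, Finset.mem_range, Set.mem_ofPred_eq] at h
    rw [Finset.mem_coe, memC]
    have eu : u = u % q + q * (u / q % q + q * (u / q / q)) := by
      rw [Nat.mod_add_div, Nat.mod_add_div]
    have h1 := Nat.mod_lt u hq0
    have h2 := Nat.mod_lt (u / q) hq0
    obtain ⟨hlt, hg, hd⟩ := h
    change GoodD (2 * m + 1) m u at hg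
    rw [eu, blk _ _ h1, blk _ _ h2] at hg
    rw [eu, hdv] at hd
    refine ⟨⟨h1, h2, ?_⟩, hg.1, hg.2.1, hg.2.2, hd⟩
    exact Nat.div_lt_of_lt_mul (Nat.div_lt_of_lt_mul hlt)
  · rintro ⟨a, b, c⟩ h
    rw [Finset.mem_coe, memC] at h
    obtain ⟨⟨ha, hb, hc⟩, -⟩ := h
    simp only [Nat.add_mul_div_left _ _ hq0, Nat.add_mul_mod_self_left, Nat.div_eq_of_lt ha,
      Nat.div_eq_of_lt hb, Nat.mod_eq_of_lt ha, Nat.mod_eq_of_lt hb, zero_add]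
  · intro u h
    simp only [Nat.mod_add_div]
end

section
/- Let p be an odd prime and r a positive integer. The number of natural numbers u with 0 ≤ u ≤ p^{4r} − 1 such that every digit in the base-p expansion of u is at most (p−1)/2 and p^r + 1 divides u equals ((p²+2p+3)(p+1)/12)^r. -/
/-- all base-`p` digits at most `(p-1)/2` -/
def Sm (p u : ℕ) : Prop := ∀ c ∈ Nat.digits p u, c ≤ (p - 1) / 2

instance (p u : ℕ) : Decidable (Sm p u) := by unfold Sm; infer_instance

lemma sm_zero (p : ℕ) : Sm p 0 := by simp [Sm]

lemma sm_step {p : ℕ} (hp : 1 < p) (x y : ℕ) (hx : x < p) :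
    Sm p (x + p * y) ↔ x ≤ (p - 1) / 2 ∧ Sm p y := by
  by_cases h : x = 0 ∧ y = 0
  · obtain ⟨rfl, rfl⟩ := h
    simp [Sm]
  · unfold Sm
    rw [Nat.digits_add p hp x y hx (by tauto)]
    simp

lemma sm_add {p : ℕ} (hp : 1 < p) (r : ℕ) : ∀ x y : ℕ, x < p ^ r →
    (Sm p (x + p ^ r * y) ↔ Sm p x ∧ Sm p y) := by
  induction r with
  | zero =>
    intro x y hx
    have : x = 0 := by simpa using hx
    subst this
    simp [sm_zero]
  | succ r ih =>
    intro x y hx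
    have hp0 : 0 < p := by omega
    have h1 : x % p < p := Nat.mod_lt _ hp0
    have h2 : x / p < p ^ r := by
      rw [Nat.div_lt_iff_lt_mul hp0]; rwa [pow_succ] at hx
    have h3 : x + p ^ (r + 1) * y = x % p + p * (x / p + p ^ r * y) := by
      conv_lhs => rw [← Nat.mod_add_div x p]
      ring
    rw [h3, sm_step hp _ _ h1, ih _ _ h2]
    conv_rhs => rw [← Nat.mod_add_div x p, sm_step hp _ _ h1]
    tauto

lemma sm_bound {p : ℕ} (hp : 1 < p) (r : ℕ) : ∀ x : ℕ, x < p ^ r → Sm p x →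
    2 * x + 1 ≤ p ^ r := by
  induction r with
  | zero => intro x hx _; simp at hx; simp [hx]
  | succ r ih =>
    intro x hx hs
    have hp0 : 0 < p := by omega
    have h1 : x % p < p := Nat.mod_lt _ hp0
    have h2 : x / p < p ^ r := by
      rw [Nat.div_lt_iff_lt_mul hp0]; rwa [pow_succ] at hx
    rw [← Nat.mod_add_div x p, sm_step hp _ _ h1] at hs
    have h4 := ih _ h2 hs.2
    have h5 : 2 * (x % p) + 1 ≤ p := by have := hs.1; omega
    have h6 := Nat.mod_add_div x p
    have h7 : p * (2 * (x / p) + 1) ≤ p * p ^ r := Nat.mul_le_mul_left _ h4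
    rw [pow_succ]
    nlinarith

/-- small numbers below `p^r` -/
def AA (p r : ℕ) : Finset ℕ := (Finset.range (p ^ r)).filter (Sm p)

/-- balanced quadruples -/
def QQ (A : Finset ℕ) : Finset (ℕ × ℕ × ℕ × ℕ) :=
  (A ×ˢ A ×ˢ A ×ˢ A).filter (fun t => t.1 + t.2.2.1 = t.2.1 + t.2.2.2)

lemma mem_QQ {A : Finset ℕ} {a b c d : ℕ} : (a, b, c, d) ∈ QQ A ↔
    (a ∈ A ∧ b ∈ A ∧ c ∈ A ∧ d ∈ A) ∧ a + c = b + d := by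
  simp [QQ]

lemma mem_AA {p r x : ℕ} : x ∈ AA p r ↔ x < p ^ r ∧ Sm p x := by simp [AA]

lemma mem_AA_succ {p r x : ℕ} (hp : 1 < p) : x ∈ AA p (r + 1) ↔
    x % p ∈ Finset.range ((p - 1) / 2 + 1) ∧ x / p ∈ AA p r := by
  have hp0 : 0 < p := by omega
  rw [mem_AA, mem_AA]
  conv_lhs => rw [← Nat.mod_add_div x p, sm_step hp _ _ (Nat.mod_lt _ hp0), Nat.mod_add_div x p]
  rw [Nat.div_lt_iff_lt_mul hp0, pow_succ, Finset.mem_range, Nat.lt_succ_iff]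
  tauto

lemma card_step {p : ℕ} (hp : 1 < p) (r : ℕ) :
    (QQ (AA p (r + 1))).card
      = (QQ (Finset.range ((p - 1) / 2 + 1)) ×ˢ QQ (AA p r)).card := by
  have hp0 : 0 < p := by omega
  apply Finset.card_nbij'
    (fun t => ((t.1 % p, t.2.1 % p, t.2.2.1 % p, t.2.2.2 % p),
      (t.1 / p, t.2.1 / p, t.2.2.1 / p, t.2.2.2 / p)))
    (fun s => (s.1.1 + p * s.2.1, s.1.2.1 + p * s.2.2.1, s.1.2.2.1 + p * s.2.2.2.1,
      s.1.2.2.2 + p * s.2.2.2.2))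
  · rintro ⟨a, b, c, d⟩ h
    simp only [Finset.mem_coe, Finset.mem_product, mem_QQ, mem_AA_succ hp] at h ⊢
    obtain ⟨⟨⟨ha, ha'⟩, ⟨hb, hb'⟩, ⟨hc, hc'⟩, ⟨hd, hd'⟩⟩, he⟩ := h
    have key : a % p + c % p = b % p + d % p := by
      have e : (a % p + c % p) % p = (b % p + d % p) % p := by
        rw [← Nat.add_mod, ← Nat.add_mod, he]
      simp only [Finset.mem_range] at ha hb hc hd
      have l1 : a % p + c % p < p := by omega
      have l2 : b % p + d % p < p := by omega
      rwa [Nat.mod_eq_of_lt l1, Nat.mod_eq_of_lt l2] at e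
    refine ⟨⟨⟨ha, hb, hc, hd⟩, key⟩, ⟨ha', hb', hc', hd'⟩, ?_⟩
    have e1 := Nat.mod_add_div a p
    have e2 := Nat.mod_add_div b p
    have e3 := Nat.mod_add_div c p
    have e4 := Nat.mod_add_div d p
    apply Nat.eq_of_mul_eq_mul_left hp0
    rw [mul_add, mul_add]
    omega
  · rintro ⟨⟨a, b, c, d⟩, a', b', c', d'⟩ h
    simp only [Finset.mem_coe, Finset.mem_product, mem_QQ, mem_AA_succ hp] at h ⊢
    obtain ⟨⟨⟨ha, hb, hc, hd⟩, he⟩, ⟨ha', hb', hc', hd'⟩, he'⟩ := h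
    have aux : ∀ z z' : ℕ, z ∈ Finset.range ((p - 1) / 2 + 1) →
        (z + p * z') % p = z ∧ (z + p * z') / p = z' := by
      intro z z' hz
      have : z < p := by simp only [Finset.mem_range] at hz; omega
      rw [Nat.add_mul_mod_self_left, Nat.mod_eq_of_lt this, Nat.add_mul_div_left _ _ hp0,
        Nat.div_eq_of_lt this]
      simp
    simp only [aux _ _ ha, aux _ _ hb, aux _ _ hc, aux _ _ hd]
    refine ⟨⟨⟨ha, ha'⟩, ⟨hb, hb'⟩, ⟨hc, hc'⟩, ⟨hd, hd'⟩⟩, ?_⟩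
    linear_combination he + p * he'
  · rintro ⟨a, b, c, d⟩ h
    simp only [Nat.mod_add_div]
  · rintro ⟨⟨a, b, c, d⟩, a', b', c', d'⟩ h
    simp only [Finset.mem_coe, Finset.mem_product, mem_QQ] at h ⊢
    obtain ⟨⟨⟨ha, hb, hc, hd⟩, he⟩, ⟨ha', hb', hc', hd'⟩, he'⟩ := h
    have aux : ∀ z z' : ℕ, z ∈ Finset.range ((p - 1) / 2 + 1) →
        (z + p * z') % p = z ∧ (z + p * z') / p = z' := by
      intro z z' hz
      have : z < p := by simp only [Finset.mem_range] at hz; omega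
      rw [Nat.add_mul_mod_self_left, Nat.mod_eq_of_lt this, Nat.add_mul_div_left _ _ hp0,
        Nat.div_eq_of_lt this]
      simp
    simp only [aux _ _ ha, aux _ _ hb, aux _ _ hc, aux _ _ hd]

lemma card_AA {p : ℕ} (hp : 1 < p) (r : ℕ) :
    (QQ (AA p r)).card = (QQ (Finset.range ((p - 1) / 2 + 1))).card ^ r := by
  induction r with
  | zero =>
    have : AA p 0 = {0} := by
      ext x
      rw [mem_AA]
      simp only [pow_zero, Nat.lt_one_iff, Finset.mem_singleton]
      constructor
      · exact fun h => h.1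
      · rintro rfl; exact ⟨rfl, sm_zero p⟩
    rw [this]; rfl
  | succ r ih => rw [card_step hp, Finset.card_product, ih, pow_succ, mul_comm]

lemma card_pairs (n a b : ℕ) (ha : a < n) (hb : b < n) :
    (((Finset.range n ×ˢ Finset.range n).filter (fun t => a + t.1 = b + t.2)).card : ℤ)
      = n - |(a : ℤ) - b| := by
  have : ((Finset.range n ×ˢ Finset.range n).filter (fun t => a + t.1 = b + t.2)).card
      = (Finset.range (n - ((a - b) + (b - a)))).card := by
    apply Finset.card_nbij' (fun t => t.1 - (b - a)) (fun z => (z + (b - a), z + (a - b)))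
    · rintro ⟨c, d⟩ h
      simp at h ⊢
      omega
    · intro z h
      simp at h ⊢
      omega
    · rintro ⟨c, d⟩ h
      simp at h ⊢
      omega
    · intro z h
      simp
  rw [this, Finset.card_range]
  rcases le_total a b with h | h
  · rw [abs_of_nonpos (by omega)]; omega
  · rw [abs_of_nonneg (by omega)]; omega

lemma sum_row (n : ℕ) : ∀ k ≤ n, 2 * ∑ b ∈ Finset.range k, |(n : ℤ) - b| = k * (2 * n + 1 - k) := by
  intro k
  induction k with
  | zero => simp
  | succ k ih =>
    intro h
    rw [Finset.sum_range_succ, mul_add, ih (by omega), abs_of_nonneg (by omega)]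
    push_cast; ring

lemma sum_abs (n : ℕ) :
    3 * ∑ a ∈ Finset.range n, ∑ b ∈ Finset.range n, |(a : ℤ) - b| = (n : ℤ) ^ 3 - n := by
  induction n with
  | zero => simp
  | succ n ih =>
    have h := sum_row n n le_rfl
    rw [Finset.sum_range_succ]
    simp_rw [Finset.sum_range_succ _ n]
    rw [Finset.sum_add_distrib]
    simp_rw [abs_sub_comm _ (n : ℤ)]
    simp only [sub_self, abs_zero]
    push_cast
    linear_combination ih + 3 * h

lemma card_range (n : ℕ) : 3 * (QQ (Finset.range n)).card = n * (2 * n ^ 2 + 1) := by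
  have h1 : (QQ (Finset.range n)).card = ∑ a ∈ Finset.range n, ∑ b ∈ Finset.range n,
      ((Finset.range n ×ˢ Finset.range n).filter (fun t => a + t.1 = b + t.2)).card := by
    simp only [QQ, Finset.card_filter, Finset.sum_product]
  have h2 : ((QQ (Finset.range n)).card : ℤ) = ∑ a ∈ Finset.range n, ∑ b ∈ Finset.range n,
      ((n : ℤ) - |(a : ℤ) - b|) := by
    rw [h1]
    push_cast
    refine Finset.sum_congr rfl fun a ha => Finset.sum_congr rfl fun b hb => ?_
    exact card_pairs n a b (Finset.mem_range.1 ha) (Finset.mem_range.1 hb)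
  simp only [Finset.sum_sub_distrib, Finset.sum_const, Finset.card_range, nsmul_eq_mul] at h2
  have h3 := sum_abs n
  zify
  linear_combination 3 * h2 - h3

lemma main_bij {p : ℕ} (hp : 1 < p) (r : ℕ) :
    ((Finset.range (p ^ (4 * r))).filter (fun u => Sm p u ∧ (p ^ r + 1) ∣ u)).card
      = (QQ (AA p r)).card := by
  have hA := @mem_AA p r
  have hadd := sm_add hp r
  have hb := sm_bound hp r
  have hq4 : p ^ (4 * r) = p ^ r * (p ^ r * (p ^ r * p ^ r)) := by ring
  have hq : 0 < p ^ r := by positivity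
  rw [hq4]
  generalize p ^ r = q at *
  have aux : ∀ z z' : ℕ, z < q → (z + q * z') % q = z ∧ (z + q * z') / q = z' := by
    intro z z' hz
    rw [Nat.add_mul_mod_self_left, Nat.mod_eq_of_lt hz, Nat.add_mul_div_left _ _ hq,
      Nat.div_eq_of_lt hz]
    simp
  have hdvd : ∀ a b c d : ℕ, a ∈ AA p r → b ∈ AA p r → c ∈ AA p r → d ∈ AA p r →
      ((q + 1) ∣ (a + q * (b + q * (c + q * d))) ↔ a + c = b + d) := by
    intro a b c d h1 h2 h3 h4
    rw [hA] at h1 h2 h3 h4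
    have k1 := hb a h1.1 h1.2
    have k2 := hb b h2.1 h2.2
    have k3 := hb c h3.1 h3.2
    have k4 := hb d h4.1 h4.2
    have e : ((a + q * (b + q * (c + q * d)) : ℕ) : ℤ) = ((a + c : ℤ) - (b + d)) +
        ((q + 1 : ℕ) : ℤ) * (b + (q - 1) * c + (q ^ 2 - q + 1) * d) := by
      push_cast; ring
    rw [← Int.natCast_dvd_natCast, e, dvd_add_left (dvd_mul_right _ _)]
    constructor
    · intro h
      have := Int.eq_zero_of_abs_lt_dvd h (by rw [abs_lt]; push_cast; omega)
      omega
    · intro h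
      have : ((a + c : ℤ) - (b + d)) = 0 := by omega
      rw [this]; exact dvd_zero _
  have hdec : ∀ u : ℕ, u = u % q + q * (u / q % q + q * (u / q / q % q + q * (u / q / q / q))) := by
    intro u
    rw [Nat.mod_add_div, Nat.mod_add_div, Nat.mod_add_div]
  apply Finset.card_nbij'
    (fun u => (u % q, u / q % q, u / q / q % q, u / q / q / q))
    (fun t => t.1 + q * (t.2.1 + q * (t.2.2.1 + q * t.2.2.2)))
  · intro u h
    simp only [Finset.coe_filter, Finset.mem_range, Set.mem_ofPred_eq] at h
    obtain ⟨hu, hs, hd⟩ := h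
    have hlt : u / q / q / q < q := by
      rw [Nat.div_div_eq_div_mul, Nat.div_div_eq_div_mul]
      apply Nat.div_lt_of_lt_mul
      calc u < _ := hu
        _ = _ := by ring
    rw [hdec u] at hs hd
    rw [hadd _ _ (Nat.mod_lt _ hq), hadd _ _ (Nat.mod_lt _ hq), hadd _ _ (Nat.mod_lt _ hq)] at hs
    have m1 := hA.2 ⟨Nat.mod_lt u hq, hs.1⟩
    have m2 := hA.2 ⟨Nat.mod_lt _ hq, hs.2.1⟩
    have m3 := hA.2 ⟨Nat.mod_lt _ hq, hs.2.2.1⟩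
    have m4 := hA.2 ⟨hlt, hs.2.2.2⟩
    rw [hdvd _ _ _ _ m1 m2 m3 m4] at hd
    exact Finset.mem_coe.2 (mem_QQ.2 ⟨⟨m1, m2, m3, m4⟩, hd⟩)
  · rintro ⟨a, b, c, d⟩ h
    obtain ⟨⟨h1, h2, h3, h4⟩, he⟩ := mem_QQ.1 (Finset.mem_coe.1 h)
    simp only [Finset.coe_filter, Finset.mem_range, Set.mem_ofPred_eq]
    rw [hdvd _ _ _ _ h1 h2 h3 h4]
    rw [hA] at h1 h2 h3 h4
    rw [hadd _ _ h1.1, hadd _ _ h2.1, hadd _ _ h3.1]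
    refine ⟨?_, ⟨h1.2, h2.2, h3.2, h4.2⟩, he⟩
    have st : ∀ x y M : ℕ, x < q → y < M → x + q * y < q * M := by
      intro x y M hx hy
      have : q * (y + 1) ≤ q * M := Nat.mul_le_mul_left _ hy
      rw [mul_add] at this
      omega
    exact st _ _ _ h1.1 (st _ _ _ h2.1 (st _ _ _ h3.1 h4.1))
  · intro u h
    exact (hdec u).symm
  · rintro ⟨a, b, c, d⟩ h
    obtain ⟨⟨h1, h2, h3, h4⟩, he⟩ := mem_QQ.1 (Finset.mem_coe.1 h)
    rw [hA] at h1 h2 h3 h4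
    simp only [aux _ _ h1.1, aux _ _ h2.1, aux _ _ h3.1]

/-- For `p` an odd prime and `r ≥ 1`, the number of `u ∈ {0, …, p^(4r)−1}` all of whose
base-`p` digits are at most `(p−1)/2` and which are divisible by `p^r + 1` equals
`((p²+2p+3)(p+1)/12)^r`. -/
theorem stmt_19 (p r : ℕ) (hp : p.Prime) (hodd : Odd p) (hr : 0 < r) :
    ((Finset.range (p ^ (4 * r))).filter
      (fun u => (∀ c ∈ Nat.digits p u, c ≤ (p - 1) / 2) ∧ (p ^ r + 1) ∣ u)).card
    = ((p ^ 2 + 2 * p + 3) * (p + 1) / 12) ^ r := by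
  have h1 := main_bij hp.one_lt r
  rw [card_AA hp.one_lt r] at h1
  have h2 : (p ^ 2 + 2 * p + 3) * (p + 1) / 12
      = (QQ (Finset.range ((p - 1) / 2 + 1))).card := by
    obtain ⟨m, rfl⟩ := hodd
    have e : (2 * m + 1 - 1) / 2 + 1 = m + 1 := by omega
    rw [e]
    have h3 := card_range (m + 1)
    apply Nat.div_eq_of_eq_mul_right (by norm_num)
    zify at h3 ⊢
    linear_combination (-4) * h3
  rw [h2, ← h1]
  congr 1
end
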